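/- Let q ∈ Φ with level vector n(q), let k be a coordinate, and suppose p* = q ± 2^{−n_k(q)} e_k belongs to [−1,1]^d (i.e., p* is a forward point of q). Then p* ∈ Φ, its level vector satisfies n_k(p*) = n_k(q) + 1 and n_j(p*) = n_j(q) for all j ≠ k, and the hierarchical hat function of p* vanishes at q: φ_{p*}(q) = 0. -/

import Mathlib

/-- The one-dimensional sparse grid level sets: `Γ(n) = ∅` for `n < 0`, `Γ(0) = {0}`,
and `Γ(n) = {2^{1-n} j : j ∈ ℤ, |j| ≤ 2^{n-1}}` for `n ≥ 1`. -/
def sgLevel (n : ℤ) : Set ℝ :=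
  if n < 0 then ∅
  else if n = 0 then {0}
  else {x | ∃ j : ℤ, |j| ≤ 2 ^ (n - 1).toNat ∧ x = (2 : ℝ) ^ (1 - n) * (j : ℝ)}

/-- The tensor grid `Γ(𝐧) = Γ(n₁) × ⋯ × Γ(n_d)`. -/
def tensorGrid (d : ℕ) (nv : Fin d → ℤ) : Set (Fin d → ℝ) :=
  {x | ∀ k, x k ∈ sgLevel (nv k)}

/-- `Φ = ⋃_{𝐧 ∈ ℤ^d} Γ(𝐧)`. -/
def sgPoints (d : ℕ) : Set (Fin d → ℝ) :=
  ⋃ nv : Fin d → ℤ, tensorGrid d nv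

/-- The level of a coordinate: `lvl(t) = min {n ≥ 0 : t ∈ Γ(n)}`. -/
noncomputable def lvl (t : ℝ) : ℕ :=
  sInf {n : ℕ | t ∈ sgLevel (n : ℤ)}

/-- One-dimensional hat functions: `φ̂_{p,0} ≡ 1`, and for `n ≥ 1`,
`φ̂_{p,n}(x) = max(0, 1 - 2^{n-1}|x - p|)`. -/
def hat1 (p : ℝ) (n : ℕ) (x : ℝ) : ℝ :=
  if n = 0 then 1 else max 0 (1 - 2 ^ (n - 1) * |x - p|)

/-- The hierarchical hat function of `p ∈ Φ`: `φ_p(x) = Π_k φ̂_{p_k, n_k(p)}(x_k)`. -/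
noncomputable def hierHat (d : ℕ) (p x : Fin d → ℝ) : ℝ :=
  ∏ k, hat1 (p k) (lvl (p k)) (x k)

/-!
For every `n ≥ 0`, including `n = 0`, `Γ(n)` consists of the even multiples of `2⁻ⁿ` in `[-1, 1]`,
so the sets `Γ(n)` increase with `n`. Shifting a point of `Γ(n)` by an odd multiple of `2⁻ⁿ` gives
an odd multiple of `2⁻ⁿ`, which is an even multiple of `2⁻⁽ⁿ⁺¹⁾` but does not lie in `Γ(n)`: its
level is exactly `n + 1`. The hat function of level `n + 1` vanishes at distance at least `2⁻ⁿ` from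
its centre, in particular at the point we started from.
-/

section Levels

variable {t : ℝ}

theorem nonneg_of_mem_sgLevel {n : ℤ} (ht : t ∈ sgLevel n) : 0 ≤ n := by
  by_contra! hn
  simp [sgLevel, hn] at ht

theorem mem_sgLevel_zero : t ∈ sgLevel 0 ↔ t = 0 := by
  simp [sgLevel]

theorem mem_sgLevel_natCast_add_one {n : ℕ} :
    t ∈ sgLevel (n + 1) ↔ |t| ≤ 1 ∧ ∃ j : ℤ, t * 2 ^ n = j := by
  have hpos : (0 : ℝ) < 2 ^ n := by positivity
  have unfold_level :
      t ∈ sgLevel (n + 1) ↔ ∃ j : ℤ, |j| ≤ 2 ^ n ∧ t = (2 ^ n)⁻¹ * (j : ℝ) := by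
    simp [sgLevel, show ¬(n : ℤ) + 1 < 0 by lia, show (n : ℤ) + 1 ≠ 0 by lia]
  have abs_le_iff {j : ℤ} (hj : t * 2 ^ n = j) : |j| ≤ 2 ^ n ↔ |t| ≤ 1 := by
    have habs : ((|j| : ℤ) : ℝ) = |t| * 2 ^ n := by
      rw [Int.cast_abs, ← hj, abs_mul, abs_of_pos hpos]
    rw [← Int.cast_le (R := ℝ), habs]
    simp [hpos]
  simp_rw [unfold_level, eq_inv_mul_iff_mul_eq₀ hpos.ne', mul_comm _ t]
  grind

theorem mem_sgLevel_natCast {n : ℕ} :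
    t ∈ sgLevel n ↔ |t| ≤ 1 ∧ ∃ j : ℤ, t * 2 ^ n = 2 * j := by
  cases n with
  | zero =>
    rw [Nat.cast_zero, mem_sgLevel_zero, pow_zero, mul_one]
    refine ⟨by rintro rfl; exact ⟨by simp, 0, by simp⟩, ?_⟩
    rintro ⟨ht, j, rfl⟩
    have hj : |2 * j| ≤ 1 := by exact_mod_cast ht
    obtain rfl : j = 0 := by grind
    simp
  | succ n =>
    have halve (j : ℤ) : t * 2 ^ (n + 1) = 2 * j ↔ t * 2 ^ n = j := by
      rw [pow_succ', mul_left_comm, mul_right_inj' two_ne_zero]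
    simp_rw [Nat.cast_succ, mem_sgLevel_natCast_add_one, halve]

theorem monotone_sgLevel : Monotone sgLevel := by
  intro m n hmn t ht
  lift m to ℕ using nonneg_of_mem_sgLevel ht
  lift n to ℕ using by lia
  obtain ⟨c, rfl⟩ := Nat.exists_eq_add_of_le (Nat.cast_le.1 hmn)
  obtain ⟨hle, j, hj⟩ := mem_sgLevel_natCast.1 ht
  refine mem_sgLevel_natCast.2 ⟨hle, j * 2 ^ c, ?_⟩
  push_cast
  rw [pow_add, ← mul_assoc, hj, mul_assoc]

theorem mem_sgLevel_lvl {n : ℤ} (ht : t ∈ sgLevel n) : t ∈ sgLevel (lvl t) := by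
  lift n to ℕ using nonneg_of_mem_sgLevel ht
  exact Nat.sInf_mem (s := {m : ℕ | t ∈ sgLevel m}) ⟨n, ht⟩

theorem lvl_eq_add_one {n : ℕ} (hmem : t ∈ sgLevel (n + 1)) (hnot : t ∉ sgLevel n) :
    lvl t = n + 1 := by
  refine le_antisymm (Nat.sInf_le (by simpa using hmem)) ?_
  by_contra! hlt
  exact hnot (monotone_sgLevel (by lia) (mem_sgLevel_lvl hmem))

end Levels

theorem mem_sgPoints_iff {d : ℕ} {x : Fin d → ℝ} :
    x ∈ sgPoints d ↔ ∀ k, x k ∈ sgLevel (lvl (x k)) := by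
  simp only [sgPoints, tensorGrid, Set.mem_iUnion, Set.mem_ofPred_eq]
  exact ⟨fun ⟨_, h⟩ k => mem_sgLevel_lvl (h k), fun h => ⟨_, h⟩⟩

section OddShift

variable {n : ℕ} {t : ℝ} {e : ℤ}

theorem add_odd_mul_zpow_mul_two_pow (ht : t ∈ sgLevel n) (he : Odd e) :
    ∃ j : ℤ, Odd j ∧ (t + e * (2 : ℝ) ^ (-(n : ℤ))) * 2 ^ n = j := by
  obtain ⟨-, i, hi⟩ := mem_sgLevel_natCast.1 ht
  refine ⟨2 * i + e, (even_two_mul i).add_odd he, ?_⟩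
  have hcancel : (2 : ℝ) ^ (-(n : ℤ)) * 2 ^ n = 1 := by simp
  push_cast
  rw [add_mul, hi, mul_assoc, hcancel, mul_one]

theorem lvl_eq_add_one_of_odd {j : ℤ} (hle : |t| ≤ 1) (hj : Odd j) (htj : t * 2 ^ n = j) :
    lvl t = n + 1 := by
  refine lvl_eq_add_one (mem_sgLevel_natCast_add_one.2 ⟨hle, j, htj⟩) fun ht => ?_
  obtain ⟨-, i, hi⟩ := mem_sgLevel_natCast.1 ht
  have hji : j = 2 * i := by exact_mod_cast htj.symm.trans hi
  exact Int.not_even_iff_odd.2 hj (hji ▸ even_two_mul i)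

end OddShift

theorem hat1_add_one_eq_zero {n : ℕ} {p x : ℝ} (h : (2 : ℝ) ^ (-(n : ℤ)) ≤ |x - p|) :
    hat1 p (n + 1) x = 0 := by
  have hone : 1 ≤ 2 ^ n * |x - p| := by
    rwa [zpow_neg, zpow_natCast, inv_le_iff_one_le_mul₀' (by positivity)] at h
  simpa [hat1] using hone

theorem hierHat_eq_zero {d : ℕ} {p x : Fin d → ℝ} {k : Fin d} {n : ℕ} (hk : lvl (p k) = n + 1)
    (h : (2 : ℝ) ^ (-(n : ℤ)) ≤ |x k - p k|) : hierHat d p x = 0 :=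
  Finset.prod_eq_zero (Finset.mem_univ k) (by rw [hk, hat1_add_one_eq_zero h])

theorem forward_point_properties_general (d : ℕ) (q : Fin d → ℝ) (hq : q ∈ sgPoints d)
    (k : Fin d) (e : ℤ) (he : Odd e) (p : Fin d → ℝ)
    (hp : p = Function.update q k (q k + e * (2 : ℝ) ^ (-(lvl (q k) : ℤ))))
    (hmem : p k ∈ Set.Icc (-1 : ℝ) 1) :
    p ∈ sgPoints d ∧
      lvl (p k) = lvl (q k) + 1 ∧
      (∀ j, j ≠ k → lvl (p j) = lvl (q j)) ∧
      hierHat d p q = 0 := by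
  have hpk : p k = q k + e * (2 : ℝ) ^ (-(lvl (q k) : ℤ)) := by simp [hp]
  have hpj : ∀ j, j ≠ k → p j = q j := fun j hj => by simp [hp, hj]
  have hqlvl := mem_sgPoints_iff.1 hq
  have hle : |p k| ≤ 1 := abs_le.2 hmem
  obtain ⟨i, hi, hpi⟩ := add_odd_mul_zpow_mul_two_pow (hqlvl k) he
  rw [← hpk] at hpi
  have hlvl : lvl (p k) = lvl (q k) + 1 := lvl_eq_add_one_of_odd hle hi hpi
  have hdist : (2 : ℝ) ^ (-(lvl (q k) : ℤ)) ≤ |q k - p k| := by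
    have he_abs : (1 : ℝ) ≤ |(e : ℝ)| := by
      exact_mod_cast Int.one_le_abs (by rintro rfl; simp at he)
    simpa [hpk, abs_mul] using he_abs
  refine ⟨mem_sgPoints_iff.2 fun j => ?_, hlvl, fun j hj => by rw [hpj j hj],
    hierHat_eq_zero hlvl hdist⟩
  rcases eq_or_ne j k with rfl | hj
  · exact mem_sgLevel_lvl (mem_sgLevel_natCast_add_one.2 ⟨hle, i, hpi⟩)
  · rw [hpj j hj]
    exact hqlvl j

/-- Let `q ∈ Φ`, let `k` be a coordinate, and suppose the forward point
`p* = q ± 2^{-n_k(q)} e_k` belongs to `[-1,1]^d`. Then `p* ∈ Φ`, its level vector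
satisfies `n_k(p*) = n_k(q) + 1` and `n_j(p*) = n_j(q)` for `j ≠ k`, and the
hierarchical hat function of `p*` vanishes at `q`: `φ_{p*}(q) = 0`. -/
theorem forward_point_properties (d : ℕ) (q : Fin d → ℝ) (hq : q ∈ sgPoints d)
    (k : Fin d) (ε : ℝ) (hε : ε = 1 ∨ ε = -1) (p : Fin d → ℝ)
    (hp : p = Function.update q k (q k + ε * (2 : ℝ) ^ (-(lvl (q k) : ℤ))))
    (hmem : ∀ j, p j ∈ Set.Icc (-1 : ℝ) 1) :
    p ∈ sgPoints d ∧
      lvl (p k) = lvl (q k) + 1 ∧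
      (∀ j, j ≠ k → lvl (p j) = lvl (q j)) ∧
      hierHat d p q = 0 := by
  rcases hε with rfl | rfl
  · exact forward_point_properties_general d q hq k 1 odd_one p (by simpa using hp) (hmem k)
  · exact forward_point_properties_general d q hq k (-1) odd_one.neg p (by simpa using hp) (hmem k)
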